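/- arXiv:1402.4415 — 4 statements merged into one kernel-verified Lean document; each statement's English description precedes it below -/
import Mathlib

section
/- Let U ⊆ ℝⁿ be a nonempty compact convex set, V a nonempty compact metric space, and L : U × V → ℝ jointly continuous such that for every fixed v ∈ V the map u ↦ L(u,v) is concave on U. Then the mixed Isaacs condition holds: sup_{u ∈ U} inf_{ν ∈ P(V)} ∫_V L(u,v) ν(dv) = inf_{ν ∈ P(V)} sup_{u ∈ U} ∫_V L(u,v) ν(dv); in particular sup_{u ∈ U} inf_{v ∈ V} L(u,v) = inf_{ν ∈ P(V)} sup_{u ∈ U} ∫_V L(u,v) ν(dv). -/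
open MeasureTheory

theorem exists_measure_of_forall_lt
    {n : ℕ} (U : Set (EuclideanSpace ℝ (Fin n)))
    (hUne : U.Nonempty) (hUcomp : IsCompact U) (hUconv : Convex ℝ U)
    {V : Type*} [MetricSpace V] [CompactSpace V] [Nonempty V]
    [MeasurableSpace V] [BorelSpace V]
    (L : EuclideanSpace ℝ (Fin n) → V → ℝ)
    (hLu : ∀ v, ContinuousOn (fun u => L u v) U)
    (hLv : ∀ u ∈ U, Continuous (L u))
    (hconc : ∀ v : V, ConcaveOn ℝ U fun u => L u v) (c : ℝ)
    (hc : ∀ u ∈ U, ∃ v, L u v < c) :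
    ∃ ν : ProbabilityMeasure V, ∀ u ∈ U, ∫ v, L u v ∂(ν : Measure V) ≤ c := by
  classical
  haveI : CompactSpace U := isCompact_iff_compactSpace.mp hUcomp
  obtain ⟨t, ht⟩ := (isCompact_univ (X := U)).elim_finite_subcover
    (fun v : V => {u : U | L u v < c})
    (fun v => isOpen_lt (continuousOn_iff_continuous_restrict.mp (hLu v)) continuous_const)
    (fun u _ => by
      obtain ⟨v, hv⟩ := hc u u.2
      exact Set.mem_iUnion.mpr ⟨v, hv⟩)
  have ht' : ∀ u ∈ U, ∃ v ∈ t, L u v < c := by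
    intro u hu
    have := ht (Set.mem_univ (⟨u, hu⟩ : U))
    simpa using this
  obtain ⟨u₀, hu₀⟩ := hUne
  obtain ⟨v₀, hv₀, -⟩ := ht' u₀ hu₀
  obtain ⟨a, ha, b, hb, hab⟩ := Sion.exists_isSaddlePointOn (X := stdSimplex ℝ t) (Y := U)
    (f := fun x u => ∑ i : t, x i * L u i)
    ⟨_, single_mem_stdSimplex ℝ (⟨v₀, hv₀⟩ : t)⟩ (convex_stdSimplex ℝ t)
    (isCompact_stdSimplex ℝ t)
    (fun u _ => Continuous.lowerSemicontinuous (by fun_prop) |>.lowerSemicontinuousOn _)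
    (fun u _ => by
      apply ConvexOn.quasiconvexOn
      refine ⟨convex_stdSimplex ℝ t, fun x _ y _ p q _ _ _ => le_of_eq ?_⟩
      simp only [Pi.add_apply, Pi.smul_apply, smul_eq_mul, Finset.mul_sum,
        ← Finset.sum_add_distrib]
      exact Finset.sum_congr rfl fun i _ => by ring)
    hUconv ⟨u₀, hu₀⟩ hUcomp
    (fun x _ => ContinuousOn.upperSemicontinuousOn
      (continuousOn_finset_sum _ fun i _ => continuousOn_const.mul (hLu i)))
    (fun x hx => by
      apply ConcaveOn.quasiconcaveOn
      refine ⟨hUconv, fun u hu w hw p q hp hq hpq => ?_⟩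
      simp only [smul_eq_mul, Finset.mul_sum, ← Finset.sum_add_distrib]
      refine Finset.sum_le_sum fun i _ => ?_
      have := mul_le_mul_of_nonneg_left ((hconc i).2 hu hw hp hq hpq) (hx.1 i)
      simp only [smul_eq_mul] at this
      linarith)
  obtain ⟨v, hv, hvc⟩ := ht' b hb
  let μ : Measure V := ∑ i : t, ENNReal.ofReal (a i) • Measure.dirac i.1
  have hμ : IsProbabilityMeasure μ := by
    constructor
    simp only [μ, Measure.coe_finset_sum, Finset.sum_apply, Measure.smul_apply, measure_univ,
      smul_eq_mul, mul_one]
    rw [← ENNReal.ofReal_sum_of_nonneg fun i _ => ha.1 i, ha.2, ENNReal.ofReal_one]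
  refine ⟨⟨μ, hμ⟩, fun u hu => ?_⟩
  have hint : ∀ ν : Measure V, IsFiniteMeasure ν → Integrable (L u) ν := fun ν _ =>
    (hLv u hu).integrable_of_hasCompactSupport (HasCompactSupport.of_compactSpace _)
  have h1 : ∫ v, L u v ∂μ = ∑ i : t, a i * L u i := by
    simp only [μ]
    rw [integral_finset_sum_measure fun i _ =>
      (hint _ inferInstance).smul_measure ENNReal.ofReal_ne_top]
    refine Finset.sum_congr rfl fun i _ => ?_
    rw [integral_smul_measure, integral_dirac, ENNReal.toReal_ofReal (ha.1 i), smul_eq_mul]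
  have h2 := hab _ (single_mem_stdSimplex ℝ (⟨v, hv⟩ : t)) u hu
  have h3 : ∑ i : t, (Pi.single (⟨v, hv⟩ : t) (1 : ℝ) : t → ℝ) i * L b i = L b v := by
    rw [Finset.sum_eq_single (⟨v, hv⟩ : t)]
    · simp
    · intro i _ hi
      simp [Pi.single_eq_of_ne hi]
    · simp
  change ∫ v, L u v ∂μ ≤ c
  simp only at h2
  rw [h1]
  linarith

/-- Let `U ⊆ ℝⁿ` be a nonempty compact convex set, `V` a nonempty compact
metric space, `L : U × V → ℝ` jointly continuous and concave in `u` for each fixed `v`.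
Then the mixed Isaacs condition holds:
`sup_{u ∈ U} inf_{ν ∈ P(V)} ∫ L(u,v) ν(dv) = inf_{ν ∈ P(V)} sup_{u ∈ U} ∫ L(u,v) ν(dv)`;
in particular `sup_{u ∈ U} inf_{v ∈ V} L(u,v) = inf_{ν ∈ P(V)} sup_{u ∈ U} ∫ L(u,v) ν(dv)`. -/
theorem mixed_isaacs_of_concave
    {n : ℕ} (U : Set (EuclideanSpace ℝ (Fin n)))
    (hUne : U.Nonempty) (hUcomp : IsCompact U) (hUconv : Convex ℝ U)
    {V : Type*} [MetricSpace V] [CompactSpace V] [Nonempty V]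
    [MeasurableSpace V] [BorelSpace V]
    (L : EuclideanSpace ℝ (Fin n) → V → ℝ)
    (hL : ContinuousOn (fun p : EuclideanSpace ℝ (Fin n) × V => L p.1 p.2)
      (U ×ˢ (Set.univ : Set V)))
    (hconc : ∀ v : V, ConcaveOn ℝ U fun u => L u v) :
    ((⨆ u : U, ⨅ ν : ProbabilityMeasure V, ∫ v, L u v ∂(ν : Measure V)) =
        ⨅ ν : ProbabilityMeasure V, ⨆ u : U, ∫ v, L u v ∂(ν : Measure V)) ∧
      (⨆ u : U, ⨅ v : V, L u v) =
        ⨅ ν : ProbabilityMeasure V, ⨆ u : U, ∫ v, L u v ∂(ν : Measure V) := by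
  have hLu : ∀ v, ContinuousOn (fun u => L u v) U := fun v =>
    hL.comp (f := fun u => (u, v)) (by fun_prop) (fun u hu => ⟨hu, Set.mem_univ _⟩)
  have hLv : ∀ u ∈ U, Continuous (L u) := fun u hu =>
    hL.comp_continuous (f := fun v => (u, v)) (by fun_prop) (fun v => ⟨hu, Set.mem_univ _⟩)
  obtain ⟨M, hM⟩ := (hUcomp.prod (isCompact_univ (X := V))).exists_bound_of_continuousOn hL
  have hM' : ∀ u ∈ U, ∀ v, |L u v| ≤ M := fun u hu v => hM (u, v) ⟨hu, Set.mem_univ _⟩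
  have hint : ∀ u ∈ U, ∀ ν : ProbabilityMeasure V, Integrable (L u) (ν : Measure V) :=
    fun u hu ν =>
      (hLv u hu).integrable_of_hasCompactSupport (HasCompactSupport.of_compactSpace _)
  have hI : ∀ u ∈ U, ∀ ν : ProbabilityMeasure V, |∫ v, L u v ∂(ν : Measure V)| ≤ M := by
    intro u hu ν
    have := norm_integral_le_of_norm_le_const (μ := (ν : Measure V)) (f := L u) (C := M)
      (Filter.Eventually.of_forall fun v => hM' u hu v)
    simpa using this
  haveI : Nonempty U := hUne.to_subtype
  haveI : Nonempty (ProbabilityMeasure V) :=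
    ⟨⟨Measure.dirac (Classical.arbitrary V), inferInstance⟩⟩
  have bdV : ∀ u : U, BddBelow (Set.range fun v => L u v) := fun u =>
    ⟨-M, by rintro _ ⟨v, rfl⟩; exact (abs_le.mp (hM' u u.2 v)).1⟩
  have bdν : ∀ u : U, BddBelow (Set.range fun ν : ProbabilityMeasure V =>
      ∫ v, L u v ∂(ν : Measure V)) := fun u =>
    ⟨-M, by rintro _ ⟨ν, rfl⟩; exact (abs_le.mp (hI u u.2 ν)).1⟩
  have bdU : ∀ ν : ProbabilityMeasure V, BddAbove (Set.range fun u : U =>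
      ∫ v, L u v ∂(ν : Measure V)) := fun ν =>
    ⟨M, by rintro _ ⟨u, rfl⟩; exact (abs_le.mp (hI u u.2 ν)).2⟩
  have bdA : BddAbove (Set.range fun u : U => ⨅ ν : ProbabilityMeasure V,
      ∫ v, L u v ∂(ν : Measure V)) :=
    ⟨M, by
      rintro _ ⟨u, rfl⟩
      exact (ciInf_le (bdν u) (Classical.arbitrary _)).trans (abs_le.mp (hI u u.2 _)).2⟩
  have bdA' : BddAbove (Set.range fun u : U => ⨅ v : V, L u v) :=
    ⟨M, by
      rintro _ ⟨u, rfl⟩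
      exact (ciInf_le (bdV u) (Classical.arbitrary _)).trans (abs_le.mp (hM' u u.2 _)).2⟩
  have bdB : BddBelow (Set.range fun ν : ProbabilityMeasure V => ⨆ u : U,
      ∫ v, L u v ∂(ν : Measure V)) :=
    ⟨-M, by
      rintro _ ⟨ν, rfl⟩
      exact (abs_le.mp (hI _ (Classical.arbitrary U).2 ν)).1.trans
        (le_ciSup (bdU ν) (Classical.arbitrary U))⟩
  have hAB : (⨆ u : U, ⨅ ν : ProbabilityMeasure V, ∫ v, L u v ∂(ν : Measure V)) ≤
      ⨅ ν : ProbabilityMeasure V, ⨆ u : U, ∫ v, L u v ∂(ν : Measure V) :=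
    ciSup_le fun u => le_ciInf fun ν => (ciInf_le (bdν u) ν).trans (le_ciSup (bdU ν) u)
  have hA'A : (⨆ u : U, ⨅ v : V, L u v) ≤
      ⨆ u : U, ⨅ ν : ProbabilityMeasure V, ∫ v, L u v ∂(ν : Measure V) := by
    refine ciSup_mono bdA fun u => le_ciInf fun ν => ?_
    have h := integral_mono (μ := (ν : Measure V)) (integrable_const (⨅ v : V, L u v))
      (hint u u.2 ν) (fun v => ciInf_le (bdV u) v)
    simpa using h
  have hBA' : (⨅ ν : ProbabilityMeasure V, ⨆ u : U, ∫ v, L u v ∂(ν : Measure V)) ≤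
      ⨆ u : U, ⨅ v : V, L u v := by
    refine le_of_forall_gt_imp_ge_of_dense fun c hc => ?_
    obtain ⟨ν, hν⟩ := exists_measure_of_forall_lt U hUne hUcomp hUconv L hLu hLv hconc c
      (fun u hu => exists_lt_of_ciInf_lt ((le_ciSup bdA' ⟨u, hu⟩).trans_lt hc))
    exact (ciInf_le bdB ν).trans (ciSup_le fun u => hν u u.2)
  exact ⟨le_antisymm hAB (hBA'.trans hA'A), le_antisymm (hA'A.trans hAB) hBA'⟩
end

section
/- Let X be a second-countable topological space and 𝓕 a nonempty family of continuous functions from X to ℝ. Then there exists a countable subfamily 𝓖 ⊆ 𝓕 such that for every x ∈ X, sup_{g ∈ 𝓖} g(x) = sup_{f ∈ 𝓕} f(x) (as an equality in the extended real numbers ℝ ∪ {+∞}). -/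
/-- On a second-countable topological space `X`, any nonempty family `F` of
continuous real-valued functions admits a countable subfamily `G ⊆ F` with the same
pointwise supremum (in the extended reals). -/
theorem exists_countable_subfamily_same_sup
    {X : Type*} [TopologicalSpace X] [SecondCountableTopology X]
    (F : Set (X → ℝ)) (hFne : F.Nonempty) (hF : ∀ f ∈ F, Continuous f) :
    ∃ G ⊆ F, G.Countable ∧
      ∀ x, (⨆ g : G, ((g : X → ℝ) x : EReal)) = ⨆ f : F, ((f : X → ℝ) x : EReal) := by
  have key : ∀ q : ℚ, ∃ T ⊆ F, T.Countable ∧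
      ⋃ f ∈ T, {x : X | (q : ℝ) < f x} = ⋃ f ∈ F, {x : X | (q : ℝ) < f x} := fun q =>
    TopologicalSpace.isOpen_biUnion_countable F (fun f => {x : X | (q : ℝ) < f x})
      (fun f hf => isOpen_lt continuous_const (hF f hf))
  choose T hTF hTc hTU using key
  have hsub : (⋃ q, T q) ⊆ F := Set.iUnion_subset hTF
  refine ⟨⋃ q, T q, hsub, Set.countable_iUnion hTc, fun x => le_antisymm ?_ ?_⟩
  · exact iSup_le fun g => le_iSup (fun f : F => ((f : X → ℝ) x : EReal)) ⟨g.1, hsub g.2⟩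
  · refine iSup_le fun f => ?_
    by_contra hlt
    obtain ⟨q, hq1, hq2⟩ := EReal.lt_iff_exists_rat_btwn.1 (not_le.1 hlt)
    have hx : x ∈ ⋃ f ∈ F, {x : X | (q : ℝ) < f x} :=
      Set.mem_biUnion f.2 (EReal.coe_lt_coe_iff.1 hq2)
    rw [← hTU q] at hx
    obtain ⟨g, hg, hgx⟩ := Set.mem_iUnion₂.1 hx
    have h1 := le_iSup (fun g : (⋃ q, T q : Set (X → ℝ)) => ((g : X → ℝ) x : EReal))
      ⟨g, Set.mem_iUnion.2 ⟨q, hg⟩⟩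
    exact absurd (h1.trans_lt hq1) (not_lt.2 (EReal.coe_le_coe_iff.2 (le_of_lt hgx)))
end

section
/- Let X be a second-countable topological space and 𝓕 a nonempty family of continuous functions from X to ℝ that is closed under pointwise maximum (if f₁, f₂ ∈ 𝓕 then max(f₁, f₂) ∈ 𝓕). Then there exists a pointwise nondecreasing sequence (f_n)_{n ∈ ℕ} of elements of 𝓕 such that for every x ∈ X, sup_n f_n(x) = sup_{f ∈ 𝓕} f(x) (as an equality in the extended real numbers ℝ ∪ {+∞}). -/
/-- On a second-countable topological space `X`, any nonempty family `F` of
continuous real-valued functions that is closed under pointwise maximum admits a pointwise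
nondecreasing sequence of its elements with the same pointwise supremum
(in the extended reals). -/
theorem exists_monotone_seq_same_sup
    {X : Type*} [TopologicalSpace X] [SecondCountableTopology X]
    (F : Set (X → ℝ)) (hFne : F.Nonempty) (hF : ∀ f ∈ F, Continuous f)
    (hmax : ∀ f₁ ∈ F, ∀ f₂ ∈ F, (fun x => max (f₁ x) (f₂ x)) ∈ F) :
    ∃ f : ℕ → X → ℝ, (∀ n, f n ∈ F) ∧ (∀ n x, f n x ≤ f (n + 1) x) ∧
      ∀ x, (⨆ n, (f n x : EReal)) = ⨆ g : F, ((g : X → ℝ) x : EReal) := by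
  classical
  have key : ∀ q : ℚ, ∃ T : Set F, T.Countable ∧
      ⋃ g ∈ T, {x | (q : ℝ) < (g : X → ℝ) x} = ⋃ g : F, {x | (q : ℝ) < (g : X → ℝ) x} :=
    fun q => TopologicalSpace.isOpen_iUnion_countable _
      (fun g => isOpen_lt continuous_const (hF g.1 g.2))
  choose T hTc hT using key
  obtain ⟨f0, hf0⟩ := hFne
  have hc : (insert (⟨f0, hf0⟩ : F) (⋃ q, T q)).Countable :=
    (Set.countable_iUnion hTc).insert _
  obtain ⟨g, hg⟩ := hc.exists_eq_range (Set.insert_nonempty _ _)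
  let f : ℕ → X → ℝ := fun n =>
    Nat.rec (g 0 : X → ℝ) (fun n h => fun x => max (h x) ((g (n + 1) : X → ℝ) x)) n
  have hfs : ∀ n x, f (n + 1) x = max (f n x) ((g (n + 1) : X → ℝ) x) := fun _ _ => rfl
  have hfF : ∀ n, f n ∈ F := by
    intro n
    induction n with
    | zero => exact (g 0).2
    | succ n ih => exact hmax _ ih _ (g (n + 1)).2
  have hgf : ∀ n x, (g n : X → ℝ) x ≤ f n x := by
    intro n x
    cases n with
    | zero => exact le_rfl
    | succ n => rw [hfs]; exact le_max_right _ _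
  refine ⟨f, hfF, fun n x => by rw [hfs]; exact le_max_left _ _, fun x => le_antisymm ?_ ?_⟩
  · exact iSup_le fun n => le_iSup (fun h : F => ((h : X → ℝ) x : EReal)) ⟨f n, hfF n⟩
  · refine iSup_le fun h => le_of_forall_lt fun c hcl => ?_
    obtain ⟨q, hcq, hq⟩ := EReal.lt_iff_exists_rat_btwn.1 hcl
    have hq' : (q : ℝ) < (h : X → ℝ) x := by exact_mod_cast hq
    have hx : x ∈ ⋃ g ∈ T q, {x | (q : ℝ) < (g : X → ℝ) x} := by
      rw [hT q]
      exact Set.mem_iUnion.2 ⟨h, hq'⟩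
    simp only [Set.mem_iUnion, Set.mem_ofPred_eq] at hx
    obtain ⟨k, hk, hkx⟩ := hx
    have hkr : k ∈ Set.range g := by
      rw [← hg]
      exact Set.mem_insert_of_mem _ (Set.mem_iUnion.2 ⟨q, hk⟩)
    obtain ⟨n, rfl⟩ := hkr
    have h1 : Real.toEReal (q : ℝ) < Real.toEReal (f n x) :=
      EReal.coe_lt_coe_iff.2 (hkx.trans_le (hgf n x))
    exact (hcq.trans h1).trans_le (le_iSup (fun n => Real.toEReal (f n x)) n)
end

section
/- Fix 0 ≤ s ≤ T, d ∈ ℕ, and a compact metric space U. Let Ω := C([s,T], ℝ^d) be the space of continuous paths, endowed with the raw natural filtration 𝔅 = (𝔅_t)_{s ≤ t ≤ T}, where 𝔅_t is the σ-algebra generated by the coordinate evaluation maps y ↦ y(u) for s ≤ u ≤ t. Call τ : Ω → [s,T] a stopping rule if {τ ≤ t} ∈ 𝔅_t for every t ∈ [s,T], and for a stopping rule τ let 𝔅_τ := {A ⊆ Ω : A ∩ {τ ≤ t} ∈ 𝔅_t for all t ∈ [s,T]}. Given a stopping rule τ, call a function α : {(t,y) : t ∈ (τ(y), T], y ∈ Ω}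 → U an elementary strategy starting at τ if there exist n ∈ ℕ, stopping rules τ = τ₀ ≤ τ₁ ≤ … ≤ τ_n = T, and maps ξ_k : Ω → U (k = 1,…,n) with each ξ_k measurable from 𝔅_{τ_{k-1}} to the Borel σ-algebra of U, such that α(t,y) = ξ_k(y) whenever τ_{k-1}(y) < t ≤ τ_k(y). Then: for any stopping rule τ, any elementary strategy α starting at s (i.e. at the constant stopping rule s), and any elementary strategy α̃ starting at τ, the concatenation α ⊗_τ α̃ : (s,T] × Ω → U defined by (α ⊗_τ α̃)(t,y) := α(t,y) if s < t ≤ τ(y) and (α ⊗_τ α̃)(t,y) := α̃(t,y) if τ(y) < t ≤ T, is again an elementary strategy starting at s. -/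
open MeasureTheory

namespace ElementaryStrategies

/-- The path space `Ω = C([s,T], ℝ^d)` of continuous paths. -/
abbrev PathSpace (s T : ℝ) (d : ℕ) := C(Set.Icc s T, EuclideanSpace ℝ (Fin d))

/-- The raw natural filtration `𝔅_t` on the path space: the σ-algebra generated by the
coordinate evaluation maps `y ↦ y(u)` for `s ≤ u ≤ t`. -/
def rawFiltration (s T : ℝ) (d : ℕ) (t : ℝ) : MeasurableSpace (PathSpace s T d) :=
  ⨆ u : {u : Set.Icc s T // (u : ℝ) ≤ t},
    MeasurableSpace.comap (fun y : PathSpace s T d => y u.1) inferInstance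

/-- A stopping rule: a map `τ : Ω → [s,T]` with `{τ ≤ t} ∈ 𝔅_t` for every `t ∈ [s,T]`. -/
def IsStoppingRule (s T : ℝ) (d : ℕ) (τ : PathSpace s T d → ℝ) : Prop :=
  (∀ y, τ y ∈ Set.Icc s T) ∧
    ∀ t ∈ Set.Icc s T, MeasurableSet[rawFiltration s T d t] {y | τ y ≤ t}

/-- Measurability of `ξ : Ω → U` with respect to the stopped σ-algebra
`𝔅_τ = {A : A ∩ {τ ≤ t} ∈ 𝔅_t for all t ∈ [s,T]}` (with `U` Borel). -/
def MeasurableWrtStopped {U : Type*} [MeasurableSpace U]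
    (s T : ℝ) (d : ℕ) (τ : PathSpace s T d → ℝ) (ξ : PathSpace s T d → U) : Prop :=
  ∀ B : Set U, MeasurableSet B →
    ∀ t ∈ Set.Icc s T, MeasurableSet[rawFiltration s T d t] (ξ ⁻¹' B ∩ {y | τ y ≤ t})

/-- An elementary (feed-back) strategy `α` starting at the stopping rule `τ`:
there are finitely many nondecreasing stopping rules `τ = τ₀ ≤ τ₁ ≤ … ≤ τ_n = T` and
`𝔅_{τ_{k-1}}`-measurably chosen constant actions `ξ_k : Ω → U` such that
`α(t,y) = ξ_k(y)` whenever `τ_{k-1}(y) < t ≤ τ_k(y)`. (We represent `α`, which the paper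
defines only on `{(t,y) : τ(y) < t ≤ T}`, as a total function whose values matter only
on that region.) -/
def IsElementaryStrategy {U : Type*} [MeasurableSpace U]
    (s T : ℝ) (d : ℕ) (τ : PathSpace s T d → ℝ) (α : ℝ → PathSpace s T d → U) : Prop :=
  IsStoppingRule s T d τ ∧
    ∃ (n : ℕ) (τs : ℕ → PathSpace s T d → ℝ) (ξ : ℕ → PathSpace s T d → U),
      (∀ k ≤ n, IsStoppingRule s T d (τs k)) ∧
      τs 0 = τ ∧
      (∀ y, τs n y = T) ∧
      (∀ k < n, ∀ y, τs k y ≤ τs (k + 1) y) ∧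
      (∀ k, 1 ≤ k → k ≤ n → MeasurableWrtStopped s T d (τs (k - 1)) (ξ k)) ∧
      (∀ k, 1 ≤ k → k ≤ n → ∀ t y, τs (k - 1) y < t → t ≤ τs k y → α t y = ξ k y)

lemma rawFiltration_mono' (s T : ℝ) (d : ℕ) {a b : ℝ} (h : a ≤ b) :
    rawFiltration s T d a ≤ rawFiltration s T d b := by
  unfold rawFiltration
  refine iSup_le fun u => ?_
  exact le_iSup (fun u : {u : Set.Icc s T // (u : ℝ) ≤ b} =>
    MeasurableSpace.comap (fun y : PathSpace s T d => y u.1) inferInstance) ⟨u.1, u.2.trans h⟩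

lemma IsStoppingRule.min' {s T : ℝ} {d : ℕ} {σ τ : PathSpace s T d → ℝ}
    (hσ : IsStoppingRule s T d σ) (hτ : IsStoppingRule s T d τ) :
    IsStoppingRule s T d (fun y => min (σ y) (τ y)) := by
  refine ⟨fun y => ⟨le_min (hσ.1 y).1 (hτ.1 y).1, (min_le_left _ _).trans (hσ.1 y).2⟩, ?_⟩
  intro t ht
  have : {y | min (σ y) (τ y) ≤ t} = {y | σ y ≤ t} ∪ {y | τ y ≤ t} := by
    ext y; simp
  rw [this]
  exact MeasurableSet.union (hσ.2 t ht) (hτ.2 t ht)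

lemma measurableSet_lt_aux {s T : ℝ} {d : ℕ} {σ τ : PathSpace s T d → ℝ}
    (hσ : IsStoppingRule s T d σ) (hτ : IsStoppingRule s T d τ) {t : ℝ}
    (ht : t ∈ Set.Icc s T) :
    MeasurableSet[rawFiltration s T d t] {y | σ y < τ y ∧ σ y ≤ t} := by
  have : {y | σ y < τ y ∧ σ y ≤ t} = ({y | σ y ≤ t} \ {y | τ y ≤ t}) ∪
      ⋃ q : {q : ℚ // (q : ℝ) ∈ Set.Icc s t},
        ({y | σ y ≤ (q.1 : ℝ)} \ {y | τ y ≤ (q.1 : ℝ)}) := by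
    ext y
    simp only [Set.mem_setOf_eq, Set.mem_union, Set.mem_diff, Set.mem_iUnion, not_le]
    constructor
    · rintro ⟨h1, h2⟩
      by_cases h : t < τ y
      · exact Or.inl ⟨h2, h⟩
      · obtain ⟨q, hq1, hq2⟩ := exists_rat_btwn h1
        exact Or.inr ⟨⟨q, (hσ.1 y).1.trans hq1.le, hq2.le.trans (not_lt.1 h)⟩, hq1.le, hq2⟩
    · rintro (⟨h1, h2⟩ | ⟨q, h1, h2⟩)
      · exact ⟨h1.trans_lt h2, h1⟩
      · exact ⟨h1.trans_lt h2, h1.trans q.2.2⟩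
  rw [this]
  refine MeasurableSet.union (MeasurableSet.diff (hσ.2 t ht) (hτ.2 t ht))
    (MeasurableSet.iUnion fun q => ?_)
  have hq : (q.1 : ℝ) ∈ Set.Icc s T := ⟨q.2.1, q.2.2.trans ht.2⟩
  exact rawFiltration_mono' s T d q.2.2 _ (MeasurableSet.diff (hσ.2 _ hq) (hτ.2 _ hq))

open Classical in
lemma measurableWrtStopped_min {U : Type*} [MeasurableSpace U]
    {s T : ℝ} {d : ℕ} {σ τ : PathSpace s T d → ℝ}
    (hσ : IsStoppingRule s T d σ) (hτ : IsStoppingRule s T d τ)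
    {ξ : PathSpace s T d → U} (hξ : MeasurableWrtStopped s T d σ ξ) (u₀ : U) :
    MeasurableWrtStopped s T d (fun y => min (σ y) (τ y))
      (fun y => if σ y < τ y then ξ y else u₀) := by
  intro B hB t ht
  have hlt := measurableSet_lt_aux hσ hτ ht
  have : (fun y => if σ y < τ y then ξ y else u₀) ⁻¹' B ∩ {y | min (σ y) (τ y) ≤ t} =
      ((ξ ⁻¹' B ∩ {y | σ y ≤ t}) ∩ {y | σ y < τ y ∧ σ y ≤ t}) ∪
      (({y | τ y ≤ t} \ {y | σ y < τ y ∧ σ y ≤ t}) ∩ {_y | u₀ ∈ B}) := by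
    ext y
    by_cases h : σ y < τ y
    · have : τ y ≤ t → σ y ≤ t := fun h' => h.le.trans h'
      simp [h]
      rw [← not_le]; tauto
    · have : σ y ≤ t → τ y ≤ t := fun h' => (not_lt.1 h).trans h'
      simp [h]
      tauto
  rw [this]
  exact MeasurableSet.union (MeasurableSet.inter (hξ B hB t ht) hlt)
    (MeasurableSet.inter (MeasurableSet.diff (hτ.2 t ht) hlt) (MeasurableSet.const _))

/-- Concatenation of elementary feed-back strategies: for a stopping rule
`τ`, an elementary strategy `α` starting at `s` (the constant stopping rule `s`), and an
elementary strategy `α̃` starting at `τ`, the concatenation `α ⊗_τ α̃`, equal to `α(t,y)`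
for `s < t ≤ τ(y)` and to `α̃(t,y)` for `τ(y) < t ≤ T`, is an elementary strategy
starting at `s`. -/
theorem concatenation_isElementaryStrategy
    {U : Type*} [MetricSpace U] [CompactSpace U] [MeasurableSpace U] [BorelSpace U]
    (s T : ℝ) (hsT : s ≤ T) (d : ℕ)
    (τ : PathSpace s T d → ℝ) (hτ : IsStoppingRule s T d τ)
    (α : ℝ → PathSpace s T d → U)
    (hα : IsElementaryStrategy s T d (fun _ => s) α)
    (αt : ℝ → PathSpace s T d → U)
    (hαt : IsElementaryStrategy s T d τ αt) :
    IsElementaryStrategy s T d (fun _ => s)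
      (fun t y => if t ≤ τ y then α t y else αt t y) := by
  classical
  obtain ⟨hs, n, τs, ξ, h1, h2, h3, h4, h5, h6⟩ := hα
  obtain ⟨-, m, τt, ξt, g1, g2, g3, g4, g5, g6⟩ := hαt
  set σ : ℕ → PathSpace s T d → ℝ :=
    fun k => if k ≤ n then (fun y => min (τs k y) (τ y)) else τt (k - n) with hσdef
  have hσ1 : ∀ k, k ≤ n → σ k = fun y => min (τs k y) (τ y) := fun k hk => if_pos hk
  have hσ2 : ∀ k, n ≤ k → σ k = τt (k - n) := by
    intro k hk
    rcases hk.eq_or_lt with rfl | hk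
    · rw [hσ1 _ le_rfl, Nat.sub_self, g2]
      funext y
      rw [h3 y, min_eq_right (hτ.1 y).2]
    · exact if_neg (by omega)
  have hmono : ∀ j, j ≤ m → ∀ y, τ y ≤ τt j y := by
    intro j
    induction j with
    | zero => intro _ y; rw [g2]
    | succ j ih => intro hj y; exact (ih (by omega) y).trans (g4 j (by omega) y)
  refine ⟨hs, n + m, σ,
    fun k => if k ≤ n then (fun y => if τs (k - 1) y < τ y then ξ k y else α 0 0)
      else ξt (k - n), ?_, ?_, ?_, ?_, ?_, ?_⟩
  · intro k hk
    by_cases h : k ≤ n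
    · rw [hσ1 k h]; exact (h1 k h).min' hτ
    · rw [hσ2 k (by omega)]; exact g1 _ (by omega)
  · rw [hσ1 0 (Nat.zero_le _), h2]
    funext y
    exact min_eq_left (hτ.1 y).1
  · intro y
    rw [hσ2 _ (by omega), Nat.add_sub_cancel_left]; exact g3 y
  · intro k hk y
    by_cases h : k < n
    · rw [hσ1 k h.le, hσ1 (k + 1) h]
      exact min_le_min_right _ (h4 k h y)
    · rw [hσ2 k (by omega), hσ2 (k + 1) (by omega), show k + 1 - n = k - n + 1 by omega]
      exact g4 _ (by omega) y
  · intro k hk hk'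
    by_cases h : k ≤ n
    · rw [hσ1 (k - 1) (by omega)]
      simp only [if_pos h]
      exact measurableWrtStopped_min (h1 _ (by omega)) hτ (h5 k hk h) _
    · rw [hσ2 (k - 1) (by omega), show k - 1 - n = k - n - 1 by omega]
      simp only [if_neg h]
      exact g5 _ (by omega) (by omega)
  · intro k hk hk' t y ht1 ht2
    by_cases h : k ≤ n
    · rw [hσ1 (k - 1) (by omega)] at ht1
      rw [hσ1 k h] at ht2
      have a1 : t ≤ τ y := ht2.trans (min_le_right _ _)
      have a2 : t ≤ τs k y := ht2.trans (min_le_left _ _)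
      have a3 : τs (k - 1) y < t := (min_lt_iff.1 ht1).resolve_right (not_lt.2 a1)
      simp only [if_pos h, if_pos a1, if_pos (a3.trans_le a1)]
      exact h6 k hk h t y a3 a2
    · rw [hσ2 (k - 1) (by omega), show k - 1 - n = k - n - 1 by omega] at ht1
      rw [hσ2 k (by omega)] at ht2
      have a1 : ¬ t ≤ τ y := not_le.2 ((hmono _ (by omega) y).trans_lt ht1)
      simp only [if_neg h, if_neg a1]
      exact g6 _ (by omega) (by omega) t y ht1 ht2

end ElementaryStrategies
end
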